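/- For d < min(2,1/β)α, t > 0 and x ≠ x' ∈ ℝ^d, there is c > 0 (depending on t and d only through the volume of a fixed ball) such that ∫_0^t ∫_{ℝ^d} [G_{t-r}(x-y) - G_{t-r}(x'-y)]² dy dr ≥ c |x'-x|² for |x'-x| small. -/

import Mathlib

open MeasureTheory Real Set
open scoped RealInnerProductSpace

/-- The Mittag-Leffler function `E_β(x) = ∑_{k≥0} x^k / Γ(1+βk)`. -/
noncomputable def mittagLeffler (β x : ℝ) : ℝ := ∑' k : ℕ, x ^ k / Real.Gamma (1 + β * k)

/-!
The function `w t = E_β(-x t^β)` solves the Volterra equation `w = 1 - x J^β w`, where `J^β` is the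
Riemann–Liouville integral. A first-zero argument gives `w > 0`; applied to `w t - w (h + t)`, it
gives that `w` decreases, so that `J^β w` is at least `w 1 / Γ(1 + β)` at time `1` and
`E_β(-x) ≤ (1 + x / Γ(1 + β))⁻¹`. Hence the symbol `ψ w = E_β(-|a w|^α)` is square integrable as
soon as `d < 2α`.

The kernel at time `s` has Fourier transform `w ↦ ψ(s^γ w)` with `γ = β / α`, and Plancherel turns
the squared increment `∫ |G_s(y + h) - G_s(y)|² dy` into `∫ (2 sin (π⟨h, w⟩))² |ψ(s^γ w)|² dw`. On
a ball centred on the line through `h`, small enough for `|ψ(s^γ w)| ≥ |ψ(0)| / 2` to hold for all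
`s ≤ t`, the sine is bounded below by a multiple of `‖h‖`. Rescaling bounds the increment at time
`s` by a multiple of `s^(-γd)`, which is integrable near `0` because `d < α / β`.
-/

open Filter Module Topology

section RiemannLiouville

/-- The Riemann–Liouville fractional integral of order `β` based at `0`, through which
`t ↦ E_β(-x t^β)` is characterised by a Volterra equation. -/
noncomputable def riemannLiouville (β : ℝ) (w : ℝ → ℝ) (t : ℝ) : ℝ :=
  (Gamma β)⁻¹ * ∫ s in 0..t, (t - s) ^ (β - 1) * w s

variable {β : ℝ} {w : ℝ → ℝ}

lemma intervalIntegrable_sub_rpow_mul (hβ : 0 < β) {t : ℝ} (ht : 0 ≤ t)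
    (hw : ContinuousOn w (Icc 0 t)) :
    IntervalIntegrable (fun s ↦ (t - s) ^ (β - 1) * w s) volume 0 t := by
  have hker : IntervalIntegrable (fun s : ℝ ↦ s ^ (β - 1)) volume 0 t :=
    intervalIntegral.intervalIntegrable_rpow' (by linarith)
  refine IntervalIntegrable.mul_continuousOn ?_ (by rwa [uIcc_of_le ht])
  simpa using (hker.comp_sub_left t).symm

lemma intervalIntegrable_add_sub_rpow_mul (hβ : 0 < β) {r t : ℝ} (hr : 0 ≤ r) (ht : 0 ≤ t)
    (hw : ContinuousOn w (Ici 0)) :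
    IntervalIntegrable (fun s ↦ (r + t - s) ^ (β - 1) * w s) volume 0 r :=
  (intervalIntegrable_sub_rpow_mul hβ (add_nonneg hr ht) (hw.mono Icc_subset_Ici_self)).mono_set
    (uIcc_subset_uIcc_left (mem_uIcc.2 (Or.inl ⟨hr, le_add_of_nonneg_right ht⟩)))

lemma riemannLiouville_mono (hβ : 0 < β) {v : ℝ → ℝ} {t : ℝ} (ht : 0 ≤ t)
    (hv : ContinuousOn v (Icc 0 t)) (hw : ContinuousOn w (Icc 0 t))
    (hvw : ∀ s ∈ Icc 0 t, v s ≤ w s) : riemannLiouville β v t ≤ riemannLiouville β w t := by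
  have hΓ := Gamma_pos_of_pos hβ
  refine mul_le_mul_of_nonneg_left ?_ (inv_nonneg.2 hΓ.le)
  refine intervalIntegral.integral_mono_on ht (intervalIntegrable_sub_rpow_mul hβ ht hv)
    (intervalIntegrable_sub_rpow_mul hβ ht hw) fun s hs ↦ ?_
  exact mul_le_mul_of_nonneg_left (hvw s hs) (rpow_nonneg (sub_nonneg.2 hs.2) _)

lemma riemannLiouville_sub (hβ : 0 < β) {v : ℝ → ℝ} {t : ℝ} (ht : 0 ≤ t)
    (hv : ContinuousOn v (Icc 0 t)) (hw : ContinuousOn w (Icc 0 t)) :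
    riemannLiouville β (fun s ↦ v s - w s) t
      = riemannLiouville β v t - riemannLiouville β w t := by
  simp only [riemannLiouville, mul_sub]
  rw [intervalIntegral.integral_sub (intervalIntegrable_sub_rpow_mul hβ ht hv)
    (intervalIntegrable_sub_rpow_mul hβ ht hw), mul_sub]

lemma riemannLiouville_rpow (hβ : 0 < β) {a t : ℝ} (ha : 0 < a) (ht : 0 < t) :
    riemannLiouville β (fun s ↦ s ^ (a - 1)) t
      = Gamma a / Gamma (a + β) * t ^ (a + β - 1) := by
  have hscaled := Complex.betaIntegral_scaled a β ht
  have hbeta : Complex.betaIntegral a β = (ProbabilityTheory.beta a β : ℂ) := by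
    rw [Complex.betaIntegral_eq_Gamma_mul_div a β (by simpa) (by simpa), ProbabilityTheory.beta]
    simp only [← Complex.ofReal_add, Complex.Gamma_ofReal]
    norm_cast
  have hreal : ∫ s in 0..t, (s : ℂ) ^ ((a : ℂ) - 1) * ((t : ℂ) - s) ^ ((β : ℂ) - 1)
      = ((∫ s in 0..t, (t - s) ^ (β - 1) * s ^ (a - 1) : ℝ) : ℂ) := by
    rw [← intervalIntegral.integral_ofReal]
    refine intervalIntegral.integral_congr fun s hs ↦ ?_
    rw [uIcc_of_le ht.le] at hs
    rw [mul_comm, Complex.ofReal_mul, Complex.ofReal_cpow hs.1,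
      Complex.ofReal_cpow (sub_nonneg.2 hs.2)]
    push_cast
    rfl
  have hpow : (t : ℂ) ^ ((a : ℂ) + β - 1) = ((t ^ (a + β - 1) : ℝ) : ℂ) := by
    rw [Complex.ofReal_cpow ht.le]
    push_cast
    rfl
  rw [hreal, hbeta, hpow, ← Complex.ofReal_mul, Complex.ofReal_inj] at hscaled
  have hΓ := (Gamma_pos_of_pos hβ).ne'
  rw [riemannLiouville, hscaled, ProbabilityTheory.beta]
  field_simp

lemma riemannLiouville_const (hβ : 0 < β) (M : ℝ) {t : ℝ} (ht : 0 < t) :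
    riemannLiouville β (fun _ ↦ M) t = M * (t ^ β / Gamma (1 + β)) := by
  have hone := riemannLiouville_rpow hβ one_pos ht
  simp only [sub_self, rpow_zero, Gamma_one, add_sub_cancel_left, riemannLiouville, mul_one]
    at hone
  rw [riemannLiouville, intervalIntegral.integral_mul_const, ← mul_assoc, hone]
  ring

lemma riemannLiouville_add (hβ : 0 < β) {r t : ℝ} (hr : 0 ≤ r) (ht : 0 ≤ t)
    (hw : ContinuousOn w (Ici 0)) :
    riemannLiouville β w (r + t) = (Gamma β)⁻¹ * (∫ s in 0..r, (r + t - s) ^ (β - 1) * w s)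
      + riemannLiouville β (fun s ↦ w (r + s)) t := by
  have hint := intervalIntegrable_sub_rpow_mul hβ (add_nonneg hr ht) (hw.mono Icc_subset_Ici_self)
  have hsplit := intervalIntegral.integral_add_adjacent_intervals
    (intervalIntegrable_add_sub_rpow_mul hβ hr ht hw)
    (hint.mono_set (c := r) (d := r + t) (uIcc_subset_uIcc_right
      (mem_uIcc.2 (Or.inl ⟨hr, le_add_of_nonneg_right ht⟩))))
  have hshift := intervalIntegral.integral_comp_add_left (a := 0) (b := t)
    (fun s ↦ (r + t - s) ^ (β - 1) * w s) r
  simp only [add_zero, add_sub_add_left_eq_sub] at hshift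
  rw [riemannLiouville, riemannLiouville, hshift, ← hsplit, mul_add]

lemma riemannLiouville_add_le (hβ0 : 0 < β) (hβ1 : β ≤ 1) {r t M : ℝ} (hr : 0 < r) (ht : 0 < t)
    (hw : ContinuousOn w (Ici 0)) (hw_nonneg : ∀ s ∈ Icc 0 r, 0 ≤ w s)
    (hw_le : ∀ s ∈ Icc r (r + t), w s ≤ M) :
    riemannLiouville β w (r + t) ≤ (r / (r + t)) ^ (1 - β) * riemannLiouville β w r
      + M * (t ^ β / Gamma (1 + β)) := by
  have hΓ := Gamma_pos_of_pos hβ0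
  have hint := intervalIntegrable_sub_rpow_mul hβ0 hr.le (hw.mono Icc_subset_Ici_self)
  rw [riemannLiouville_add hβ0 hr.le ht.le hw]
  refine add_le_add ?_ ?_
  · rw [riemannLiouville, mul_left_comm]
    refine mul_le_mul_of_nonneg_left ?_ (inv_nonneg.2 hΓ.le)
    rw [← intervalIntegral.integral_const_mul]
    refine intervalIntegral.integral_mono_on_of_le_Ioo hr.le
      (intervalIntegrable_add_sub_rpow_mul hβ0 hr.le ht.le hw) (hint.const_mul _) fun s hs ↦ ?_
    have hrs : 0 < r - s := sub_pos.2 hs.2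
    have hrts : 0 < r + t - s := by linarith
    have hratio : (r - s) / (r + t - s) ≤ r / (r + t) := by
      rw [div_le_div_iff₀ hrts (by positivity)]
      nlinarith [hs.1]
    rw [← mul_assoc]
    refine mul_le_mul_of_nonneg_right ?_ (hw_nonneg s ⟨hs.1.le, hs.2.le⟩)
    calc (r + t - s) ^ (β - 1) = ((r - s) / (r + t - s)) ^ (1 - β) * (r - s) ^ (β - 1) := by
          rw [div_rpow hrs.le hrts.le, ← neg_sub 1 β, rpow_neg hrs.le, rpow_neg hrts.le]
          have := (rpow_pos_of_pos hrs (1 - β)).ne'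
          field_simp
      _ ≤ (r / (r + t)) ^ (1 - β) * (r - s) ^ (β - 1) := by
          gcongr
  · rw [← riemannLiouville_const hβ0 M ht]
    refine riemannLiouville_mono hβ0 ht.le (hw.comp (by fun_prop) fun s hs ↦ ?_)
      continuousOn_const fun s hs ↦ hw_le _ ⟨by linarith [hs.1], by linarith [hs.2]⟩
    exact add_nonneg hr.le hs.1

lemma exists_first_nonpos {T : ℝ} (hT : 0 ≤ T) (hw : ContinuousOn w (Icc 0 T)) (hw0 : 0 < w 0)
    (hwT : w T ≤ 0) : ∃ t₀ > 0, w t₀ ≤ 0 ∧ ∀ s ∈ Ico 0 t₀, 0 < w s := by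
  have hclosed : IsClosed (Icc 0 T ∩ w ⁻¹' Iic 0) :=
    hw.preimage_isClosed_of_isClosed isClosed_Icc isClosed_Iic
  obtain ⟨t₀, ⟨ht₀, hwt₀⟩, hleast⟩ :=
    (isCompact_Icc.of_isClosed_subset hclosed inter_subset_left).exists_isLeast
      ⟨T, right_mem_Icc.2 hT, hwT⟩
  refine ⟨t₀, ht₀.1.lt_of_ne ?_, hwt₀, fun s hs ↦ ?_⟩
  · rintro rfl
    exact hw0.not_ge hwt₀
  · by_contra! hws
    exact hs.2.not_ge (hleast ⟨⟨hs.1, hs.2.le.trans ht₀.2⟩, hws⟩)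

lemma eventually_mul_rpow_div_Gamma_lt (hβ : 0 < β) (c : ℝ) {t₀ : ℝ} (ht₀ : 0 < t₀) :
    ∀ᶠ h in 𝓝 0, c * (h ^ β / Gamma (1 + β)) < ((t₀ - h) / t₀) ^ (1 - β) := by
  have hleft : ContinuousAt (fun h : ℝ ↦ c * (h ^ β / Gamma (1 + β))) 0 :=
    ((continuousAt_rpow_const 0 β (Or.inr hβ.le)).div_const _).const_mul _
  have hright : ContinuousAt (fun h : ℝ ↦ ((t₀ - h) / t₀) ^ (1 - β)) 0 :=
    ContinuousAt.rpow_const (by fun_prop) (Or.inl (by simp [ht₀.ne']))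
  refine hleft.eventually_lt hright ?_
  simp [zero_rpow hβ.ne', ht₀.ne']

-- At the first zero `t₀` compare `w t₀` with the maximum of `w` over a short interval before `t₀`:
-- the equation only loses the factor `(t₁ / t₀) ^ (1 - β)` and a small local term between them.
theorem pos_of_eq_sub_riemannLiouville (hβ0 : 0 < β) (hβ1 : β ≤ 1) {c : ℝ} (hc : 0 ≤ c)
    {f : ℝ → ℝ} (hw : ContinuousOn w (Ici 0)) (hw0 : 0 < w 0)
    (hf : MonotoneOn (fun t ↦ t ^ (1 - β) * f t) (Ioi 0))
    (heq : ∀ t > 0, w t = f t - c * riemannLiouville β w t) {t : ℝ} (ht : 0 ≤ t) : 0 < w t := by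
  by_contra! hwt
  obtain ⟨t₀, ht₀, hwt₀, hpos⟩ := exists_first_nonpos ht (hw.mono Icc_subset_Ici_self) hw0 hwt
  obtain ⟨ε, hε, hsmall⟩ := Metric.eventually_nhds_iff.1
    (eventually_mul_rpow_div_Gamma_lt hβ0 c ht₀)
  obtain ⟨h, hh, hh_lt⟩ := exists_between (lt_min hε ht₀)
  obtain ⟨hhε, hht₀⟩ := lt_min_iff.1 hh_lt
  obtain ⟨t₁, ht₁, hmax⟩ := (isCompact_Icc (a := t₀ - h) (b := t₀)).exists_isMaxOn
    (nonempty_Icc.2 (by linarith)) (hw.mono fun s hs ↦ mem_Ici.2 (by linarith [hs.1]))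
  have hwt₁ : 0 < w t₁ := (hpos (t₀ - h) ⟨by linarith, by linarith⟩).trans_le
    (hmax (left_mem_Icc.2 (by linarith)))
  have ht₁_pos : 0 < t₁ := by linarith [ht₁.1]
  have hlt : t₁ < t₀ := ht₁.2.lt_of_ne fun h ↦ hwt₀.not_gt (h ▸ hwt₁)
  have hlocal := hsmall (y := t₀ - t₁) (by
    rw [dist_zero_right, norm_of_nonneg (by linarith)]
    linarith [ht₁.1])
  have hJ := riemannLiouville_add_le hβ0 hβ1 ht₁_pos (sub_pos.2 hlt) hw
    (fun s hs ↦ (hpos s ⟨hs.1, hs.2.trans_lt hlt⟩).le)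
    (fun s hs ↦ hmax ⟨ht₁.1.trans hs.1, by linarith [hs.2]⟩)
  rw [add_sub_cancel] at hJ
  rw [sub_sub_cancel] at hlocal
  have hf' : (t₁ / t₀) ^ (1 - β) * f t₁ ≤ f t₀ := by
    rw [div_rpow ht₁_pos.le ht₀.le, div_mul_eq_mul_div, div_le_iff₀ (by positivity),
      mul_comm (f t₀)]
    exact hf ht₁_pos ht₀ hlt.le
  refine hwt₀.not_gt ?_
  calc 0 < w t₁ * ((t₁ / t₀) ^ (1 - β) - c * ((t₀ - t₁) ^ β / Gamma (1 + β))) :=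
        mul_pos hwt₁ (sub_pos.2 hlocal)
    _ = (t₁ / t₀) ^ (1 - β) * f t₁ - c * ((t₁ / t₀) ^ (1 - β) * riemannLiouville β w t₁
          + w t₁ * ((t₀ - t₁) ^ β / Gamma (1 + β))) := by
        rw [heq t₁ ht₁_pos]
        ring
    _ ≤ f t₀ - c * riemannLiouville β w t₀ := by gcongr
    _ = w t₀ := (heq t₀ ht₀).symm

lemma riemannLiouville_const_mul (c t : ℝ) :
    riemannLiouville β (fun s ↦ c * w s) t = c * riemannLiouville β w t := by
  simp only [riemannLiouville, mul_left_comm _ c, intervalIntegral.integral_const_mul]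

lemma riemannLiouville_pos (hβ : 0 < β) {t : ℝ} (ht : 0 < t) (hw : ContinuousOn w (Icc 0 t))
    (hw_pos : ∀ s ∈ Icc 0 t, 0 < w s) : 0 < riemannLiouville β w t :=
  mul_pos (inv_pos.2 (Gamma_pos_of_pos hβ)) (intervalIntegral.intervalIntegral_pos_of_pos_on
    (intervalIntegrable_sub_rpow_mul hβ ht.le hw)
    (fun s hs ↦ mul_pos (rpow_pos_of_pos (sub_pos.2 hs.2) _)
      (hw_pos s (Ioo_subset_Icc_self hs))) ht)

lemma monotoneOn_rpow_mul_integral_add_sub_rpow_mul (hβ0 : 0 < β) (hβ1 : β ≤ 1) {h : ℝ}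
    (hh : 0 ≤ h) (hw : ContinuousOn w (Ici 0)) (hw_nonneg : ∀ s ∈ Icc 0 h, 0 ≤ w s) :
    MonotoneOn (fun t ↦ t ^ (1 - β) * ∫ s in 0..h, (h + t - s) ^ (β - 1) * w s) (Ioi 0) := by
  intro t (ht : 0 < t) r (hr : 0 < r) htr
  have hkernel {t s : ℝ} (ht : 0 < t) (hs : s ≤ h) :
      t ^ (1 - β) * (h + t - s) ^ (β - 1) = (t / (h + t - s)) ^ (1 - β) := by
    have hpos : 0 < h + t - s := by linarith
    rw [div_rpow ht.le hpos.le, ← neg_sub 1 β, rpow_neg hpos.le, div_eq_mul_inv]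
  simp only [← intervalIntegral.integral_const_mul]
  refine intervalIntegral.integral_mono_on hh
    ((intervalIntegrable_add_sub_rpow_mul hβ0 hh ht.le hw).const_mul _)
    ((intervalIntegrable_add_sub_rpow_mul hβ0 hh hr.le hw).const_mul _) fun s hs ↦ ?_
  rw [← mul_assoc, ← mul_assoc, hkernel ht hs.2, hkernel hr hs.2]
  have hts : 0 < h + t - s := by linarith [hs.2]
  have hrs : 0 < h + r - s := by linarith [hs.2]
  refine mul_le_mul_of_nonneg_right (rpow_le_rpow (by positivity) ?_ (by linarith))
    (hw_nonneg s hs)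
  rw [div_le_div_iff₀ hts hrs]
  nlinarith [hs.2]

lemma hasSum_riemannLiouville (hβ : 0 < β) {u : ℕ → ℝ → ℝ} {b : ℕ → ℝ} {t : ℝ} (ht : 0 ≤ t)
    (hu : ∀ n, ContinuousOn (u n) (Icc 0 t)) (hb : Summable b)
    (hub : ∀ n, ∀ s ∈ Icc 0 t, |u n s| ≤ b n) :
    HasSum (fun n ↦ riemannLiouville β (u n) t)
      (riemannLiouville β (fun s ↦ ∑' n, u n s) t) := by
  have hmem {s : ℝ} (hs : s ∈ uIoc 0 t) : s ∈ Icc 0 t :=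
    Ioc_subset_Icc_self (by rwa [uIoc_of_le ht] at hs)
  refine HasSum.mul_left _ (intervalIntegral.hasSum_integral_of_dominated_convergence
    (F := fun n s ↦ (t - s) ^ (β - 1) * u n s) (fun n s ↦ (t - s) ^ (β - 1) * b n)
    (fun n ↦ (intervalIntegrable_sub_rpow_mul hβ ht (hu n)).aestronglyMeasurable_restrict_uIoc)
    (fun n ↦ ae_of_all _ fun s hs ↦ ?_) (ae_of_all _ fun s _ ↦ hb.mul_left _) ?_
    (ae_of_all _ fun s hs ↦ ?_))
  · have hker : 0 ≤ (t - s) ^ (β - 1) := rpow_nonneg (sub_nonneg.2 (hmem hs).2) _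
    rw [norm_mul, norm_of_nonneg hker]
    exact mul_le_mul_of_nonneg_left (hub n s (hmem hs)) hker
  · simp only [tsum_mul_left]
    exact intervalIntegrable_sub_rpow_mul hβ ht continuousOn_const
  · have hsummable : Summable fun n ↦ u n s := hb.of_norm_bounded fun n ↦ hub n s (hmem hs)
    exact hsummable.hasSum.mul_left _

end RiemannLiouville

section MittagLeffler

lemma rpow_mul_exp_neg_le_Gamma {A y : ℝ} (hA : 0 < A) (hy : 1 ≤ y) :
    A ^ (y - 1) * exp (-A) ≤ Gamma y := by
  have hconv := GammaIntegral_convergent (s := y) (by linarith)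
  have hsub : Ioi A ⊆ Ioi (0 : ℝ) := Ioi_subset_Ioi hA.le
  rw [Gamma_eq_integral (by linarith)]
  calc A ^ (y - 1) * exp (-A) = ∫ x in Ioi A, A ^ (y - 1) * exp (-x) := by
        rw [integral_const_mul, integral_exp_neg_Ioi]
    _ ≤ ∫ x in Ioi A, exp (-x) * x ^ (y - 1) := by
        refine setIntegral_mono_on ((integrableOn_exp_neg_Ioi A).const_mul _)
          (hconv.mono_set hsub) measurableSet_Ioi fun x hx ↦ ?_
        rw [mul_comm]
        gcongr
        exact le_of_lt hx
    _ ≤ ∫ x in Ioi 0, exp (-x) * x ^ (y - 1) := by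
        refine setIntegral_mono_set hconv ?_ (ae_of_all _ hsub)
        filter_upwards [ae_restrict_mem measurableSet_Ioi] with x hx
        exact mul_nonneg (exp_pos _).le (rpow_nonneg (le_of_lt hx) _)

variable {β : ℝ}

lemma Gamma_one_add_mul_natCast_pos (hβ : 0 ≤ β) (k : ℕ) : 0 < Gamma (1 + β * k) :=
  Gamma_pos_of_pos (by positivity)

lemma norm_pow_div_Gamma (hβ : 0 ≤ β) (x : ℝ) (k : ℕ) :
    ‖x ^ k / Gamma (1 + β * k)‖ = |x| ^ k / Gamma (1 + β * k) := by
  rw [norm_div, norm_pow, norm_eq_abs, norm_of_nonneg (Gamma_one_add_mul_natCast_pos hβ k).le]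

lemma summable_mittagLeffler (hβ : 0 < β) (x : ℝ) :
    Summable fun k : ℕ ↦ x ^ k / Gamma (1 + β * k) := by
  set A : ℝ := (2 * (|x| + 1)) ^ β⁻¹
  have hA : 0 < A := by positivity
  have hAβ : A ^ β = 2 * (|x| + 1) := rpow_inv_rpow (by positivity) hβ.ne'
  refine (summable_geometric_two.mul_left (exp A)).of_norm_bounded fun k ↦ ?_
  rw [norm_pow_div_Gamma hβ.le, div_le_iff₀ (Gamma_one_add_mul_natCast_pos hβ.le k)]
  calc |x| ^ k ≤ (|x| + 1) ^ k := by gcongr; simp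
    _ = exp A * (1 / 2) ^ k * (A ^ (1 + β * k - 1) * exp (-A)) := by
        rw [add_sub_cancel_left, rpow_mul hA.le, rpow_natCast, hAβ, mul_pow, exp_neg, div_pow,
          one_pow]
        field_simp
    _ ≤ exp A * (1 / 2) ^ k * Gamma (1 + β * k) := by
        gcongr
        exact rpow_mul_exp_neg_le_Gamma hA (le_add_of_nonneg_right (by positivity))

lemma continuous_mittagLeffler (hβ : 0 < β) : Continuous (mittagLeffler β) := by
  refine continuous_iff_continuousAt.2 fun x ↦ ?_
  refine ContinuousOn.continuousAt (s := Metric.ball 0 (|x| + 1)) ?_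
    (Metric.isOpen_ball.mem_nhds (by simp))
  refine continuousOn_tsum (fun k ↦ by fun_prop) (summable_mittagLeffler hβ (|x| + 1))
    fun k y hy ↦ ?_
  have := Gamma_one_add_mul_natCast_pos hβ.le k
  rw [norm_pow_div_Gamma hβ.le]
  gcongr
  simpa using (mem_ball_zero_iff.1 hy).le

lemma mittagLeffler_zero : mittagLeffler β 0 = 1 := by
  rw [mittagLeffler, tsum_eq_single 0 fun k hk ↦ by simp [hk]]
  simp

lemma mul_riemannLiouville_mul_rpow_pow (hβ : 0 < β) (x : ℝ) {t : ℝ} (ht : 0 < t) (n : ℕ) :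
    x * riemannLiouville β (fun s ↦ (x * s ^ β) ^ n / Gamma (1 + β * n)) t
      = (x * t ^ β) ^ (n + 1) / Gamma (1 + β * (n + 1 : ℕ)) := by
  have hΓ := (Gamma_one_add_mul_natCast_pos hβ.le n).ne'
  have hmonomial : riemannLiouville β (fun s ↦ (x * s ^ β) ^ n / Gamma (1 + β * n)) t
      = riemannLiouville β (fun s ↦ x ^ n / Gamma (1 + β * n) * s ^ (1 + β * n - 1)) t := by
    refine congr_arg _ (intervalIntegral.integral_congr fun s hs ↦ ?_)
    rw [uIcc_of_le ht.le] at hs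
    simp only [add_sub_cancel_left, rpow_mul hs.1, rpow_natCast, mul_pow]
    ring
  rw [hmonomial, riemannLiouville_const_mul, riemannLiouville_rpow hβ (by positivity) ht,
    show 1 + β * n + β = 1 + β * (n + 1 : ℕ) by push_cast; ring, add_sub_cancel_left,
    rpow_mul ht.le, rpow_natCast, mul_pow, pow_succ x]
  field_simp

lemma mul_riemannLiouville_mittagLeffler (hβ : 0 < β) (x : ℝ) {t : ℝ} (ht : 0 < t) :
    x * riemannLiouville β (fun s ↦ mittagLeffler β (x * s ^ β)) t
      = mittagLeffler β (x * t ^ β) - 1 := by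
  have hsum := (hasSum_riemannLiouville (u := fun n s ↦ (x * s ^ β) ^ n / Gamma (1 + β * n)) hβ
    ht.le (fun n ↦ ?_) (summable_mittagLeffler hβ (|x| * t ^ β)) fun n s hs ↦ ?_).mul_left x
  · simp only [mul_riemannLiouville_mul_rpow_pow hβ x ht] at hsum
    rw [mittagLeffler, (summable_mittagLeffler hβ (x * t ^ β)).tsum_eq_zero_add, hsum.tsum_eq]
    simp [mittagLeffler]
  · exact ((continuous_const.mul (continuous_rpow_const hβ.le)).pow n).continuousOn.div_const _
  · have := Gamma_one_add_mul_natCast_pos hβ.le n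
    have hpow : |x * s ^ β| ≤ |x| * t ^ β := by
      rw [abs_mul, abs_of_nonneg (rpow_nonneg hs.1 β)]
      gcongr
      exacts [hs.1, hs.2]
    rw [← norm_eq_abs, norm_pow_div_Gamma hβ.le]
    gcongr

lemma continuous_mittagLeffler_mul_rpow (hβ : 0 < β) (x : ℝ) :
    Continuous fun t : ℝ ↦ mittagLeffler β (x * t ^ β) :=
  (continuous_mittagLeffler hβ).comp (continuous_const.mul (continuous_rpow_const hβ.le))

lemma mittagLeffler_neg_mul_rpow_eq (hβ : 0 < β) (x : ℝ) {t : ℝ} (ht : 0 < t) :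
    mittagLeffler β (-x * t ^ β)
      = 1 - x * riemannLiouville β (fun s ↦ mittagLeffler β (-x * s ^ β)) t := by
  linarith [mul_riemannLiouville_mittagLeffler hβ (-x) ht]

lemma mittagLeffler_neg_mul_rpow_pos (hβ0 : 0 < β) (hβ1 : β ≤ 1) {x t : ℝ} (hx : 0 ≤ x)
    (ht : 0 ≤ t) : 0 < mittagLeffler β (-x * t ^ β) := by
  refine pos_of_eq_sub_riemannLiouville hβ0 hβ1 hx
    (continuous_mittagLeffler_mul_rpow hβ0 (-x)).continuousOn ?_ (f := fun _ ↦ 1)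
    (fun s hs r _ hsr ↦ ?_) (fun s hs ↦ mittagLeffler_neg_mul_rpow_eq hβ0 x hs) ht
  · simp [zero_rpow hβ0.ne', mittagLeffler_zero]
  · simpa using rpow_le_rpow (le_of_lt hs) hsr (sub_nonneg.2 hβ1)

lemma mittagLeffler_neg_pos (hβ0 : 0 < β) (hβ1 : β ≤ 1) {x : ℝ} (hx : 0 ≤ x) :
    0 < mittagLeffler β (-x) := by
  simpa using mittagLeffler_neg_mul_rpow_pos hβ0 hβ1 hx zero_le_one

lemma mittagLeffler_neg_lt_one (hβ0 : 0 < β) (hβ1 : β ≤ 1) {x : ℝ} (hx : 0 < x) :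
    mittagLeffler β (-x) < 1 := by
  have hJ := riemannLiouville_pos hβ0 one_pos
    (continuous_mittagLeffler_mul_rpow hβ0 (-x)).continuousOn
    fun s hs ↦ mittagLeffler_neg_mul_rpow_pos hβ0 hβ1 hx.le hs.1
  have hvolterra := mittagLeffler_neg_mul_rpow_eq hβ0 x one_pos
  rw [one_rpow, mul_one] at hvolterra
  linarith [mul_pos hx hJ]

-- The increment `w t - w (h + t)` solves the Volterra equation whose source is the history term
-- `∫ s in 0..h, (h + t - s) ^ (β - 1) * w s`.
lemma mittagLeffler_neg_mul_add_rpow_lt (hβ0 : 0 < β) (hβ1 : β ≤ 1) {x t h : ℝ} (hx : 0 < x)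
    (hh : 0 < h) (ht : 0 ≤ t) :
    mittagLeffler β (-x * (h + t) ^ β) < mittagLeffler β (-x * t ^ β) := by
  set w : ℝ → ℝ := fun s ↦ mittagLeffler β (-x * s ^ β) with hw_def
  have hw : Continuous w := continuous_mittagLeffler_mul_rpow hβ0 (-x)
  have hw_shift : Continuous fun s ↦ w (h + s) := hw.comp (continuous_const_add h)
  have hvolterra {s : ℝ} (hs : 0 < s) : w s = 1 - x * riemannLiouville β w s :=
    mittagLeffler_neg_mul_rpow_eq hβ0 x hs
  have hmono := monotoneOn_rpow_mul_integral_add_sub_rpow_mul hβ0 hβ1 hh.le hw.continuousOn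
    fun s hs ↦ (mittagLeffler_neg_mul_rpow_pos hβ0 hβ1 hx.le hs.1).le
  refine sub_pos.1 (pos_of_eq_sub_riemannLiouville hβ0 hβ1 hx.le (w := fun s ↦ w s - w (h + s))
    (hw.sub hw_shift).continuousOn ?_
    (f := fun s ↦ x * ((Gamma β)⁻¹ * ∫ r in 0..h, (h + s - r) ^ (β - 1) * w r))
    (fun s hs r hr hsr ↦ ?_) (fun s hs ↦ ?_) ht)
  · simpa [hw_def, zero_rpow hβ0.ne', mittagLeffler_zero] using
      mittagLeffler_neg_lt_one hβ0 hβ1 (by positivity : 0 < x * h ^ β)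
  · have hΓ := Gamma_pos_of_pos hβ0
    simp only [mul_left_comm (_ ^ (1 - β)) x, mul_left_comm (_ ^ (1 - β)) (Gamma β)⁻¹]
    exact mul_le_mul_of_nonneg_left (mul_le_mul_of_nonneg_left (hmono hs hr hsr)
      (inv_nonneg.2 hΓ.le)) hx.le
  · rw [riemannLiouville_sub hβ0 hs.le hw.continuousOn hw_shift.continuousOn,
      hvolterra hs, hvolterra (add_pos hh hs),
      riemannLiouville_add hβ0 hh.le hs.le hw.continuousOn]
    ring

lemma mittagLeffler_neg_mul_le_one (hβ0 : 0 < β) (hβ1 : β ≤ 1) {x : ℝ} (hx : 0 ≤ x) :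
    mittagLeffler β (-x) * (1 + x / Gamma (1 + β)) ≤ 1 := by
  obtain rfl | hx := hx.eq_or_lt
  · simp [mittagLeffler_zero]
  have hle : ∀ s ∈ Icc (0 : ℝ) 1, mittagLeffler β (-x) ≤ mittagLeffler β (-x * s ^ β) := by
    intro s hs
    obtain rfl | hs1 := hs.2.eq_or_lt
    · simp
    · simpa using (mittagLeffler_neg_mul_add_rpow_lt hβ0 hβ1 hx (sub_pos.2 hs1) hs.1).le
  have hJ := riemannLiouville_mono hβ0 zero_le_one continuousOn_const
    (continuous_mittagLeffler_mul_rpow hβ0 (-x)).continuousOn hle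
  rw [riemannLiouville_const hβ0 _ one_pos, one_rpow] at hJ
  have hvolterra := mittagLeffler_neg_mul_rpow_eq hβ0 x one_pos
  rw [one_rpow, mul_one] at hvolterra
  calc mittagLeffler β (-x) * (1 + x / Gamma (1 + β))
      = mittagLeffler β (-x) + x * (mittagLeffler β (-x) * (1 / Gamma (1 + β))) := by ring
    _ ≤ mittagLeffler β (-x)
          + x * riemannLiouville β (fun s ↦ mittagLeffler β (-x * s ^ β)) 1 := by gcongr
    _ = 1 := by linarith

lemma mittagLeffler_neg_mul_one_add_le (hβ0 : 0 < β) (hβ1 : β ≤ 1) {x : ℝ} (hx : 0 ≤ x) :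
    mittagLeffler β (-x) * (1 + x) ≤ 1 + Gamma (1 + β) := by
  have : 0 < Gamma (1 + β) := Gamma_pos_of_pos (by linarith)
  have hpos := mittagLeffler_neg_pos hβ0 hβ1 hx
  calc mittagLeffler β (-x) * (1 + x)
      ≤ mittagLeffler β (-x) * ((1 + Gamma (1 + β)) * (1 + x / Gamma (1 + β))) := by
        refine mul_le_mul_of_nonneg_left ?_ hpos.le
        calc 1 + x ≤ 1 + x + (Gamma (1 + β) + x / Gamma (1 + β)) :=
              le_add_of_nonneg_right (by positivity)
          _ = (1 + Gamma (1 + β)) * (1 + x / Gamma (1 + β)) := by field_simp; ring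
    _ = (1 + Gamma (1 + β)) * (mittagLeffler β (-x) * (1 + x / Gamma (1 + β))) := by ring
    _ ≤ 1 + Gamma (1 + β) :=
        mul_le_of_le_one_right (by positivity) (mittagLeffler_neg_mul_le_one hβ0 hβ1 hx)

lemma one_add_rpow_le {α r : ℝ} (hα : 0 ≤ α) (hr : 0 ≤ r) :
    (1 + r) ^ α ≤ 2 ^ α * (1 + r ^ α) := by
  have hmax : max 1 r ^ α ≤ 1 + r ^ α := by
    obtain h | h := le_total 1 r
    · simp [h]
    · simpa [h] using rpow_nonneg hr α
  calc (1 + r) ^ α ≤ (2 * max 1 r) ^ α := by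
        gcongr
        linarith [le_max_left 1 r, le_max_right 1 r]
    _ = 2 ^ α * max 1 r ^ α := mul_rpow zero_le_two (by positivity)
    _ ≤ 2 ^ α * (1 + r ^ α) := by gcongr

lemma mittagLeffler_neg_rpow_le (hβ0 : 0 < β) (hβ1 : β ≤ 1) {α r : ℝ} (hα : 0 ≤ α) (hr : 0 ≤ r) :
    mittagLeffler β (-r ^ α) ≤ 2 ^ α * (1 + Gamma (1 + β)) * (1 + r) ^ (-α) := by
  have hpos := mittagLeffler_neg_pos hβ0 hβ1 (rpow_nonneg hr α)
  rw [rpow_neg (by positivity), ← div_eq_mul_inv, le_div_iff₀ (by positivity)]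
  calc mittagLeffler β (-r ^ α) * (1 + r) ^ α
      ≤ mittagLeffler β (-r ^ α) * (2 ^ α * (1 + r ^ α)) := by
        gcongr
        exact one_add_rpow_le hα hr
    _ = 2 ^ α * (mittagLeffler β (-r ^ α) * (1 + r ^ α)) := by ring
    _ ≤ 2 ^ α * (1 + Gamma (1 + β)) := by
        gcongr
        exact mittagLeffler_neg_mul_one_add_le hβ0 hβ1 (rpow_nonneg hr α)

variable {V : Type*} [NormedAddCommGroup V]

lemma continuous_mittagLeffler_neg_norm_rpow (hβ : 0 < β) {α : ℝ} (hα : 0 ≤ α) :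
    Continuous fun w : V ↦ mittagLeffler β (-‖w‖ ^ α) :=
  (continuous_mittagLeffler hβ).comp (continuous_norm.rpow_const fun _ ↦ Or.inr hα).neg

variable [NormedSpace ℝ V] [FiniteDimensional ℝ V] [MeasureSpace V] [BorelSpace V]
  [(volume : Measure V).IsAddHaarMeasure]

lemma memLp_one_add_norm_rpow_neg {p : ENNReal} (hp0 : p ≠ 0) (hp : p ≠ ⊤) {α : ℝ}
    (hV : (finrank ℝ V : ℝ) < α * p.toReal) : MemLp (fun w : V ↦ (1 + ‖w‖) ^ (-α)) p := by
  have hcont : Continuous fun w : V ↦ (1 + ‖w‖) ^ (-α) :=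
    (by fun_prop : Continuous fun w : V ↦ 1 + ‖w‖).rpow_const fun w ↦
      Or.inl (by positivity)
  refine (integrable_norm_rpow_iff hcont.aestronglyMeasurable hp0 hp).1 ?_
  refine (integrable_one_add_norm hV).congr (ae_of_all _ fun w ↦ ?_)
  simp only [norm_of_nonneg (rpow_nonneg (add_nonneg zero_le_one (norm_nonneg w)) _),
    ← rpow_mul (add_nonneg zero_le_one (norm_nonneg w)), neg_mul]

lemma memLp_mittagLeffler_neg_norm_rpow (hβ0 : 0 < β) (hβ1 : β ≤ 1) {p : ENNReal} (hp0 : p ≠ 0)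
    (hp : p ≠ ⊤) {α : ℝ} (hα : 0 ≤ α) (hV : (finrank ℝ V : ℝ) < α * p.toReal) :
    MemLp (fun w : V ↦ mittagLeffler β (-‖w‖ ^ α)) p := by
  refine (memLp_one_add_norm_rpow_neg hp0 hp hV).of_le_mul (c := 2 ^ α * (1 + Gamma (1 + β)))
    (continuous_mittagLeffler_neg_norm_rpow hβ0 hα).aestronglyMeasurable (ae_of_all _ fun w ↦ ?_)
  rw [norm_of_nonneg (mittagLeffler_neg_pos hβ0 hβ1 (by positivity)).le,
    norm_of_nonneg (by positivity)]
  exact mittagLeffler_neg_rpow_le hβ0 hβ1 hα (norm_nonneg w)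

end MittagLeffler

section Plancherel

open FourierTransform SchwartzMap
open scoped ContDiff

variable {V F : Type*} [NormedAddCommGroup V] [InnerProductSpace ℝ V] [FiniteDimensional ℝ V]
  [MeasurableSpace V] [BorelSpace V] [NormedAddCommGroup F] [InnerProductSpace ℂ F]
  {f : V → F}

lemma integrable_of_fourier_ne_zero {w : V} (hw : 𝓕 f w ≠ 0) : Integrable f := by
  by_contra hf
  rw [Real.fourier_eq, integral_undef (mt (Real.fourierIntegral_convergent_iff w).1 hf)] at hw
  exact hw rfl

lemma norm_toLp_two_sq {X E : Type*} [MeasurableSpace X] [NormedAddCommGroup E] {μ : Measure X}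
    {f : X → E} (hf : MemLp f 2 μ) : ‖hf.toLp f‖ ^ 2 = ∫ x, ‖f x‖ ^ 2 ∂μ := by
  rw [Lp.norm_toLp, toReal_eLpNorm hf.aestronglyMeasurable,
    lpNorm_eq_integral_norm_rpow_toReal two_ne_zero ENNReal.ofNat_ne_top hf.aestronglyMeasurable,
    ENNReal.toReal_ofNat, ← rpow_natCast, ← rpow_mul (by positivity)]
  norm_num

variable [CompleteSpace F]

lemma fourierInv_toLp_ae_eq (hf : Integrable f) (hg : MemLp (𝓕 f) 2) :
    (𝓕⁻ (hg.toLp (𝓕 f)) : Lp F 2 (volume : Measure V)) =ᵐ[volume] f := by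
  set g : Lp F 2 (volume : Measure V) := hg.toLp (𝓕 f)
  refine ae_eq_of_integral_contDiff_smul_eq ((Lp.memLp (𝓕⁻ g)).locallyIntegrable one_le_two)
    hf.locallyIntegrable fun φ hφ hφ_compact ↦ ?_
  have hsupp : HasCompactSupport (Complex.ofRealCLM ∘ φ) := hφ_compact.comp_left rfl
  set Φ : 𝓢(V, ℂ) := hsupp.toSchwartzMap (by fun_prop) with hΦ
  have hΦ_apply (x : V) : Φ x = (φ x : ℂ) := by simp [hΦ]
  set Ψ : 𝓢(V, ℂ) := 𝓕⁻ Φ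
  have hΨ : 𝓕 Ψ = Φ := fourier_fourierInv_eq Φ
  have hflip : ∫ x, 𝓕 Ψ x • f x = ∫ x, Ψ x • 𝓕 f x := by
    simpa using! VectorFourier.integral_fourierIntegral_smul_eq_flip (L := innerₗ V)
      (μ := volume) (ν := volume) continuous_fourierChar continuous_inner Ψ.integrable hf
  calc ∫ x, φ x • (𝓕⁻ g : Lp F 2 (volume : Measure V)) x
      = Lp.toTemperedDistribution (𝓕⁻ g) Φ := by
        simp [Lp.toTemperedDistribution_apply, hΦ_apply]
    _ = ∫ x, Ψ x • g x := by
        rw [← Lp.fourierInv_toTemperedDistribution_eq, TemperedDistribution.fourierInv_apply,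
          Lp.toTemperedDistribution_apply]
    _ = ∫ x, Ψ x • 𝓕 f x := by
        refine integral_congr_ae ?_
        filter_upwards [hg.coeFn_toLp] with x hx
        rw [hx]
    _ = ∫ x, φ x • f x := by
        rw [← hflip, hΨ]
        simp [hΦ_apply]

theorem integral_norm_sq_eq_integral_norm_fourier_sq (hf : Integrable f) (hg : MemLp (𝓕 f) 2) :
    ∫ x, ‖f x‖ ^ 2 = ∫ w, ‖𝓕 f w‖ ^ 2 := by
  set g : Lp F 2 (volume : Measure V) := hg.toLp (𝓕 f)
  have hae := fourierInv_toLp_ae_eq hf hg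
  have hf2 : MemLp f 2 := (memLp_congr_ae hae).1 (Lp.memLp _)
  have htoLp : hf2.toLp f = 𝓕⁻ g := by
    rw [← Lp.toLp_coeFn (𝓕⁻ g) (Lp.memLp _)]
    exact MemLp.toLp_congr _ _ hae.symm
  rw [← norm_toLp_two_sq hf2, ← norm_toLp_two_sq hg, htoLp, ← Lp.norm_fourier_eq,
    fourier_fourierInv_eq]

end Plancherel

section ShiftedBall

variable {V : Type*} [NormedAddCommGroup V] [InnerProductSpace ℝ V]

lemma norm_le_of_mem_ball_smul {h w : V} {ρ : ℝ} (hρ : 0 ≤ ρ)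
    (hw : w ∈ Metric.ball ((ρ / 2 / ‖h‖) • h) (ρ / 4)) : ‖w‖ ≤ ρ := by
  have hcenter : ‖(ρ / 2 / ‖h‖) • h‖ ≤ ρ / 2 := by
    rw [norm_smul, norm_of_nonneg (by positivity)]
    obtain hh | hh := eq_or_ne ‖h‖ 0
    · rw [hh, mul_zero]
      positivity
    · rw [div_mul_cancel₀ _ hh]
  have hdist := mem_ball_iff_norm.1 hw
  linarith [norm_le_norm_add_norm_sub' w ((ρ / 2 / ‖h‖) • h)]

lemma mul_norm_le_inner_of_mem_ball_smul {h w : V} {ρ : ℝ}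
    (hw : w ∈ Metric.ball ((ρ / 2 / ‖h‖) • h) (ρ / 4)) : ρ / 4 * ‖h‖ ≤ ⟪h, w⟫ := by
  set w₀ := (ρ / 2 / ‖h‖) • h with hw₀
  have hcenter : ⟪h, w₀⟫ = ρ / 2 * ‖h‖ := by
    rw [hw₀, inner_smul_right, real_inner_self_eq_norm_sq]
    obtain hh | hh := eq_or_ne ‖h‖ 0
    · simp [hh]
    · field_simp
  have hdist := mem_ball_iff_norm.1 hw
  have hdiff : -(‖h‖ * (ρ / 4)) ≤ ⟪h, w - w₀⟫ :=
    (abs_le.1 ((abs_real_inner_le_norm _ _).trans (by gcongr))).1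
  have hsum : ⟪h, w⟫ = ⟪h, w₀⟫ + ⟪h, w - w₀⟫ := by rw [← inner_add_right, add_sub_cancel]
  linarith

lemma sq_mul_norm_sq_le_sin_inner_sq {h w : V} {ρ : ℝ} (hρ : 0 ≤ ρ) (hh : ‖h‖ * ρ ≤ 1 / 2)
    (hw : w ∈ Metric.ball ((ρ / 2 / ‖h‖) • h) (ρ / 4)) :
    (ρ * ‖h‖) ^ 2 ≤ (2 * sin (π * ⟪h, w⟫)) ^ 2 := by
  have hlower := mul_norm_le_inner_of_mem_ball_smul hw
  have hupper : ⟪h, w⟫ ≤ 1 / 2 := calc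
    ⟪h, w⟫ ≤ ‖h‖ * ‖w‖ := real_inner_le_norm h w
    _ ≤ ‖h‖ * ρ := by gcongr; exact norm_le_of_mem_ball_smul hρ hw
    _ ≤ 1 / 2 := hh
  have hinner : 0 ≤ ⟪h, w⟫ := le_trans (by positivity) hlower
  have hsin : 2 / π * (π * ⟪h, w⟫) ≤ sin (π * ⟪h, w⟫) :=
    mul_le_sin (by positivity) (by nlinarith [pi_pos])
  rw [← mul_assoc, div_mul_cancel₀ _ pi_ne_zero] at hsin
  exact pow_le_pow_left₀ (by positivity) (by linarith) 2

end ShiftedBall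

section FourierIncrement

open FourierTransform

variable {V F : Type*} [NormedAddCommGroup V] [InnerProductSpace ℝ V] [FiniteDimensional ℝ V]
  [MeasurableSpace V] [BorelSpace V] [NormedAddCommGroup F] [InnerProductSpace ℂ F]
  {f : V → F}

lemma fourier_comp_add_right_sub (hf : Integrable f) (h w : V) :
    𝓕 (fun y ↦ f (y + h) - f y) w = ((𝐞 ⟪h, w⟫ : ℂ) - 1) • 𝓕 f w := by
  have hshift := congr_fun (VectorFourier.fourierIntegral_comp_add_right 𝐞 volume (innerₗ V) f h) w
  have hsub : 𝓕 (fun y ↦ f (y + h) - f y) w = 𝓕 (f ∘ (· + h)) w - 𝓕 f w := by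
    simp only [Real.fourier_eq, smul_sub, Function.comp_apply]
    exact integral_sub ((Real.fourierIntegral_convergent_iff w).2 (hf.comp_add_right h))
      ((Real.fourierIntegral_convergent_iff w).2 hf)
  rw [hsub, sub_smul, one_smul]
  exact congr_arg (· - _) hshift

lemma norm_fourierChar_sub_one (θ : ℝ) : ‖(𝐞 θ : ℂ) - 1‖ = |2 * sin (π * θ)| := by
  rw [Real.fourierChar_apply, mul_comm, Complex.norm_exp_I_mul_ofReal_sub_one, norm_eq_abs]
  congr 3
  ring

lemma norm_fourier_comp_add_right_sub_sq (hf : Integrable f) (h w : V) :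
    ‖𝓕 (fun y ↦ f (y + h) - f y) w‖ ^ 2 = (2 * sin (π * ⟪h, w⟫)) ^ 2 * ‖𝓕 f w‖ ^ 2 := by
  rw [fourier_comp_add_right_sub hf, norm_smul, mul_pow, norm_fourierChar_sub_one, sq_abs]

lemma memLp_fourier_comp_add_right_sub (hf : Integrable f) (hf2 : MemLp (𝓕 f) 2) (h : V) :
    MemLp (𝓕 fun y ↦ f (y + h) - f y) 2 := by
  have hcont : Continuous fun w ↦ (𝐞 ⟪h, w⟫ : ℂ) - 1 := by fun_prop
  refine hf2.of_le_mul (c := 2) ?_ (ae_of_all _ fun w ↦ ?_)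
  · rw [funext (fourier_comp_add_right_sub hf h)]
    exact hcont.aestronglyMeasurable.smul hf2.aestronglyMeasurable
  · rw [fourier_comp_add_right_sub hf, norm_smul, norm_fourierChar_sub_one, abs_mul, abs_two]
    gcongr
    exact mul_le_of_le_one_right zero_le_two (abs_sin_le_one _)

theorem integral_norm_comp_add_right_sub_sq [CompleteSpace F] (hf : Integrable f)
    (hf2 : MemLp (𝓕 f) 2) (h : V) :
    ∫ y, ‖f (y + h) - f y‖ ^ 2 = ∫ w, (2 * sin (π * ⟪h, w⟫)) ^ 2 * ‖𝓕 f w‖ ^ 2 := by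
  have hplancherel : ∫ y, ‖f (y + h) - f y‖ ^ 2 = ∫ w, ‖𝓕 (fun y ↦ f (y + h) - f y) w‖ ^ 2 :=
    integral_norm_sq_eq_integral_norm_fourier_sq ((hf.comp_add_right h).sub hf)
      (memLp_fourier_comp_add_right_sub hf hf2 h)
  simpa only [norm_fourier_comp_add_right_sub_sq hf] using hplancherel

lemma integral_norm_comp_add_right_sub_sq_le [CompleteSpace F] (hf : Integrable f)
    (hf2 : MemLp (𝓕 f) 2) (h : V) :
    ∫ y, ‖f (y + h) - f y‖ ^ 2 ≤ 4 * ∫ w, ‖𝓕 f w‖ ^ 2 := by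
  rw [integral_norm_comp_add_right_sub_sq hf hf2, ← integral_const_mul]
  refine integral_mono_of_nonneg (ae_of_all _ fun w ↦ by positivity)
    (hf2.norm.integrable_sq.const_mul 4) (ae_of_all _ fun w ↦ ?_)
  refine mul_le_mul_of_nonneg_right ?_ (sq_nonneg _)
  nlinarith [sin_sq_le_one (π * ⟪h, w⟫)]

theorem mul_norm_sq_le_integral_norm_comp_add_right_sub_sq [CompleteSpace F] (hf : Integrable f)
    (hf2 : MemLp (𝓕 f) 2) {κ ρ : ℝ} (hκ : 0 ≤ κ) (hρ : 0 ≤ ρ)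
    (hlower : ∀ w, ‖w‖ ≤ ρ → κ ≤ ‖𝓕 f w‖) {h : V} (hh : ‖h‖ * ρ ≤ 1 / 2) :
    (κ * ρ) ^ 2 * volume.real (Metric.ball (0 : V) (ρ / 4)) * ‖h‖ ^ 2
      ≤ ∫ y, ‖f (y + h) - f y‖ ^ 2 := by
  set B := Metric.ball ((ρ / 2 / ‖h‖) • h) (ρ / 4)
  have hint : Integrable fun w ↦ (2 * sin (π * ⟪h, w⟫)) ^ 2 * ‖𝓕 f w‖ ^ 2 := by
    simpa only [norm_fourier_comp_add_right_sub_sq hf]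
      using (memLp_fourier_comp_add_right_sub hf hf2 h).norm.integrable_sq
  rw [integral_norm_comp_add_right_sub_sq hf hf2]
  calc (κ * ρ) ^ 2 * volume.real (Metric.ball (0 : V) (ρ / 4)) * ‖h‖ ^ 2
      = ∫ _ in B, (ρ * ‖h‖) ^ 2 * κ ^ 2 := by
        rw [setIntegral_const, ← Measure.addHaar_real_ball_center volume ((ρ / 2 / ‖h‖) • h),
          smul_eq_mul]
        ring
    _ ≤ ∫ w in B, (2 * sin (π * ⟪h, w⟫)) ^ 2 * ‖𝓕 f w‖ ^ 2 := by
        refine setIntegral_mono_on (integrableOn_const (by finiteness)) hint.integrableOn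
          measurableSet_ball fun w hw ↦ ?_
        gcongr ?_ * ?_ ^ 2
        · exact sq_mul_norm_sq_le_sin_inner_sq hρ hh hw
        · exact hlower w (norm_le_of_mem_ball_smul hρ hw)
    _ ≤ ∫ w, (2 * sin (π * ⟪h, w⟫)) ^ 2 * ‖𝓕 f w‖ ^ 2 :=
        setIntegral_le_integral hint (ae_of_all _ fun w ↦ by positivity)

end FourierIncrement

section Dilation

lemma exists_forall_norm_le_half_norm_le {V F : Type*} [SeminormedAddCommGroup V]
    [NormedAddCommGroup F] {ψ : V → F} (hψ : ContinuousAt ψ 0)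
    (hψ0 : ψ 0 ≠ 0) : ∃ ρ > 0, ∀ w, ‖w‖ ≤ ρ → ‖ψ 0‖ / 2 ≤ ‖ψ w‖ := by
  have hlt : ∀ᶠ w in 𝓝 0, ‖ψ 0‖ / 2 < ‖ψ w‖ :=
    hψ.norm.eventually_const_lt (half_lt_self (norm_pos_iff.2 hψ0))
  obtain ⟨ρ, hρ, hball⟩ := Metric.nhds_basis_closedBall.eventually_iff.1 hlt
  exact ⟨ρ, hρ, fun w hw ↦ (hball (mem_closedBall_zero_iff.2 hw)).le⟩

variable {V F : Type*} [NormedAddCommGroup V] [NormedSpace ℝ V] [FiniteDimensional ℝ V]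
  [MeasureSpace V] [BorelSpace V] [(volume : Measure V).IsAddHaarMeasure] [NormedAddCommGroup F]
  {ψ : V → F}

lemma memLp_comp_smul {p : ENNReal} (hψ : MemLp ψ p) {a : ℝ} (ha : a ≠ 0) :
    MemLp (fun w ↦ ψ (a • w)) p := by
  refine MemLp.comp_of_map ?_ (measurable_const_smul a).aemeasurable
  rw [Measure.map_addHaar_smul volume ha]
  exact hψ.smul_measure ENNReal.ofReal_ne_top

lemma integrableOn_integral_norm_comp_rpow_smul_sq (ψ : V → F) {γ t : ℝ} (hγ : γ * finrank ℝ V < 1)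
    (ht : 0 ≤ t) : IntegrableOn (fun s : ℝ ↦ ∫ w, ‖ψ (s ^ γ • w)‖ ^ 2) (Ioc 0 t) := by
  have hpow : IntegrableOn (fun s : ℝ ↦ s ^ (-(γ * finrank ℝ V))) (Ioc 0 t) :=
    (intervalIntegrable_iff_integrableOn_Ioc_of_le ht).1
      (intervalIntegral.intervalIntegrable_rpow' (by linarith))
  refine IntegrableOn.congr_fun (Integrable.mul_const hpow (∫ w, ‖ψ w‖ ^ 2)) (fun s hs ↦ ?_)
    measurableSet_Ioc
  have hs0 : 0 < s := hs.1
  simp only [Measure.integral_comp_smul_of_nonneg volume (fun w ↦ ‖ψ w‖ ^ 2) (s ^ γ)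
    (hR := by positivity), rpow_neg hs0.le, rpow_mul_natCast hs0.le, smul_eq_mul]

end Dilation

section SelfSimilar

open FourierTransform

variable {V F : Type*} [NormedAddCommGroup V] [InnerProductSpace ℝ V] [FiniteDimensional ℝ V]
  [MeasurableSpace V] [BorelSpace V] [NormedAddCommGroup F] [InnerProductSpace ℂ F]
  [CompleteSpace F] {ψ : V → F} {γ t : ℝ} {G : ℝ → V → F}

lemma integrableOn_integral_norm_comp_add_right_sub_sq (hψ : Continuous ψ) (hψ2 : MemLp ψ 2)
    (hγ0 : 0 ≤ γ) (hγ : γ * finrank ℝ V < 1) (hGint : ∀ s > 0, Integrable (G s))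
    (hG : ∀ s > 0, 𝓕 (G s) = fun w ↦ ψ (s ^ γ • w)) (ht : 0 ≤ t) (h : V) :
    IntegrableOn (fun s ↦ ∫ y, ‖G s (y + h) - G s y‖ ^ 2) (Ioc 0 t) := by
  have hGfourier {s : ℝ} (hs : 0 < s) : MemLp (𝓕 (G s)) 2 := by
    rw [hG s hs]
    exact memLp_comp_smul hψ2 (rpow_pos_of_pos hs γ).ne'
  have hcont : Continuous fun p : ℝ × V ↦
      (2 * sin (π * ⟪h, p.2⟫)) ^ 2 * ‖ψ (p.1 ^ γ • p.2)‖ ^ 2 := by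
    have := continuous_rpow_const hγ0
    fun_prop
  have hmeas : AEStronglyMeasurable (fun s ↦ ∫ y, ‖G s (y + h) - G s y‖ ^ 2)
      (volume.restrict (Ioc 0 t)) := by
    refine (StronglyMeasurable.integral_prod_right' (ν := (volume : Measure V))
      hcont.stronglyMeasurable).aestronglyMeasurable.congr ?_
    filter_upwards [ae_restrict_mem measurableSet_Ioc] with s hs
    rw [integral_norm_comp_add_right_sub_sq (hGint s hs.1) (hGfourier hs.1), hG s hs.1]
  refine ((integrableOn_integral_norm_comp_rpow_smul_sq ψ hγ ht).const_mul 4).mono' hmeas ?_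
  filter_upwards [ae_restrict_mem measurableSet_Ioc] with s hs
  rw [norm_of_nonneg (integral_nonneg fun y ↦ by positivity)]
  simpa only [hG s hs.1]
    using integral_norm_comp_add_right_sub_sq_le (hGint s hs.1) (hGfourier hs.1) h

theorem exists_mul_norm_sq_le_integral_of_fourier_eq_comp_rpow_smul (hψ : Continuous ψ)
    (hψ2 : MemLp ψ 2) (hψ0 : ψ 0 ≠ 0) (hγ0 : 0 ≤ γ) (hγ : γ * finrank ℝ V < 1)
    (hG : ∀ s > 0, 𝓕 (G s) = fun w ↦ ψ (s ^ γ • w)) (ht : 0 < t) :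
    ∃ c > 0, ∃ δ > 0, ∀ h : V, ‖h‖ < δ →
      c * ‖h‖ ^ 2 ≤ ∫ s in Ioc 0 t, ∫ y, ‖G s (y + h) - G s y‖ ^ 2 := by
  have hGint (s : ℝ) (hs : 0 < s) : Integrable (G s) :=
    integrable_of_fourier_ne_zero (w := 0) (by simpa [hG s hs])
  obtain ⟨r, hr, hψr⟩ := exists_forall_norm_le_half_norm_le hψ.continuousAt hψ0
  set ρ := r / t ^ γ
  have hρ : 0 < ρ := by positivity
  have hlower (s : ℝ) (hs : s ∈ Ioc 0 t) (w : V) (hw : ‖w‖ ≤ ρ) : ‖ψ 0‖ / 2 ≤ ‖𝓕 (G s) w‖ := by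
    rw [hG s hs.1]
    refine hψr _ ?_
    rw [norm_smul, norm_of_nonneg (rpow_nonneg hs.1.le γ)]
    calc s ^ γ * ‖w‖ ≤ t ^ γ * ρ := by
          gcongr
          exacts [hs.1.le, hs.2]
      _ = r := mul_div_cancel₀ r (by positivity)
  set m := (‖ψ 0‖ / 2 * ρ) ^ 2 * volume.real (Metric.ball (0 : V) (ρ / 4))
  have hm : 0 < m := by
    have hball : 0 < volume.real (Metric.ball (0 : V) (ρ / 4)) :=
      ENNReal.toReal_pos (Metric.measure_ball_pos _ _ (by positivity)).ne' (by finiteness)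
    have := norm_pos_iff.2 hψ0
    positivity
  refine ⟨t * m, by positivity, 1 / 2 / ρ, by positivity, fun h hh ↦ ?_⟩
  calc t * m * ‖h‖ ^ 2 = ∫ _ in Ioc 0 t, m * ‖h‖ ^ 2 := by
        rw [setIntegral_const, volume_real_Ioc_of_le ht.le, sub_zero, smul_eq_mul, mul_assoc]
    _ ≤ ∫ s in Ioc 0 t, ∫ y, ‖G s (y + h) - G s y‖ ^ 2 := by
        refine setIntegral_mono_on (integrableOn_const (by simp))
          (integrableOn_integral_norm_comp_add_right_sub_sq hψ hψ2 hγ0 hγ hGint hG ht.le h)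
          measurableSet_Ioc fun s hs ↦ ?_
        refine mul_norm_sq_le_integral_norm_comp_add_right_sub_sq (hGint s hs.1) ?_
          (by positivity) hρ.le (hlower s hs) ((lt_div_iff₀ hρ).1 hh).le
        rw [hG s hs.1]
        exact memLp_comp_smul hψ2 (rpow_pos_of_pos hs.1 γ).ne'

end SelfSimilar

section Increments

open FourierTransform

lemma setIntegral_Ioc_comp_sub_left {E : Type*} [NormedAddCommGroup E] [NormedSpace ℝ E]
    (f : ℝ → E) {t : ℝ} (ht : 0 ≤ t) : ∫ r in Ioc 0 t, f (t - r) = ∫ s in Ioc 0 t, f s := by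
  simp [← intervalIntegral.integral_of_le ht]

lemma mul_norm_smul_rpow_mul_rpow {V : Type*} [NormedAddCommGroup V] [NormedSpace ℝ V]
    {ν β α s : ℝ} (hν : 0 ≤ ν) (hα : α ≠ 0) (hs : 0 ≤ s) (w : V) :
    ν * ‖-(2 * π) • w‖ ^ α * s ^ β = ‖(2 * π * ν ^ α⁻¹) • s ^ (β / α) • w‖ ^ α := by
  have hsβ : (s ^ (β / α)) ^ α = s ^ β := by rw [← rpow_mul hs, div_mul_cancel₀ β hα]
  have hright : ‖(2 * π * ν ^ α⁻¹) • s ^ (β / α) • w‖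
      = ν ^ α⁻¹ * s ^ (β / α) * ‖-(2 * π) • w‖ := by
    simp only [norm_smul, norm_neg, norm_mul, norm_of_nonneg (rpow_nonneg hs _),
      norm_of_nonneg (rpow_nonneg hν _)]
    ring
  rw [hright, mul_rpow (by positivity) (norm_nonneg _), mul_rpow (by positivity) (by positivity),
    rpow_inv_rpow hν hα, hsβ]
  ring

variable {V : Type*} [NormedAddCommGroup V] [InnerProductSpace ℝ V] [FiniteDimensional ℝ V]
  [MeasurableSpace V] [BorelSpace V]

lemma integral_sub_left_sub_sub_left_sq (g : V → ℝ) (x x' : V) :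
    ∫ y, (g (x - y) - g (x' - y)) ^ 2 = ∫ y, ‖(g (y + (x - x')) : ℂ) - g y‖ ^ 2 := by
  rw [← integral_sub_left_eq_self _ volume x']
  refine integral_congr_ae (ae_of_all _ fun y ↦ ?_)
  have hxy : x - (x' - y) = y + (x - x') := by abel
  simp only [hxy, sub_sub_cancel, ← Complex.ofReal_sub, Complex.norm_real, norm_eq_abs, sq_abs]

lemma fourier_eq_integral_exp_I_mul (g : V → ℂ) (w : V) :
    𝓕 g w = ∫ x, Complex.exp (Complex.I * (⟪-(2 * π) • w, x⟫ : ℝ)) * g x := by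
  rw [Real.fourier_eq']
  simp only [real_inner_smul_left, real_inner_comm w, smul_eq_mul, mul_comm Complex.I, neg_mul,
    mul_assoc]

end Increments

theorem spatial_increment_lower_estimate_general {V : Type*} [NormedAddCommGroup V]
    [InnerProductSpace ℝ V] [FiniteDimensional ℝ V] [MeasurableSpace V] [BorelSpace V]
    {ν β α : ℝ} (hν : 0 < ν) (hβ0 : 0 < β) (hβ1 : β ≤ 1) (hα : 0 < α)
    (hV : (finrank ℝ V : ℝ) < min 2 β⁻¹ * α) (G : ℝ → V → ℝ)
    (hF : ∀ s > (0 : ℝ), ∀ ξ : V, (∫ x, Complex.exp (Complex.I * (⟪ξ, x⟫ : ℝ)) * (G s x : ℂ))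
      = (mittagLeffler β (-(ν * ‖ξ‖ ^ α * s ^ β)) : ℂ)) {t : ℝ} (ht : 0 < t) :
    ∃ c > (0 : ℝ), ∃ δ > (0 : ℝ), ∀ x x' : V, ‖x' - x‖ < δ →
      c * ‖x' - x‖ ^ 2
        ≤ ∫ r in Ioc (0 : ℝ) t, ∫ y, (G (t - r) (x - y) - G (t - r) (x' - y)) ^ 2 := by
  set a := 2 * π * ν ^ α⁻¹
  have ha : a ≠ 0 := by positivity
  set ψ : V → ℂ := fun w ↦ mittagLeffler β (-‖a • w‖ ^ α)
  have hψ : Continuous ψ := Complex.continuous_ofReal.comp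
    ((continuous_mittagLeffler_neg_norm_rpow hβ0 hα.le).comp (continuous_const_smul a))
  have hV2 : (finrank ℝ V : ℝ) < α * (2 : ENNReal).toReal := by
    rw [ENNReal.toReal_ofNat, mul_comm]
    exact hV.trans_le (by gcongr; exact min_le_left _ _)
  have hψ2 : MemLp ψ 2 := (memLp_comp_smul (memLp_mittagLeffler_neg_norm_rpow hβ0 hβ1 two_ne_zero
    ENNReal.ofNat_ne_top hα.le hV2) ha).ofReal
  have hψ0 : ψ 0 ≠ 0 := by simp [ψ, zero_rpow hα.ne', mittagLeffler_zero]
  have hγ : β / α * finrank ℝ V < 1 := calc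
    β / α * finrank ℝ V < β / α * (β⁻¹ * α) := by
      gcongr
      exact hV.trans_le (by gcongr; exact min_le_right _ _)
    _ = 1 := by field_simp
  obtain ⟨c, hc, δ, hδ, hle⟩ := exists_mul_norm_sq_le_integral_of_fourier_eq_comp_rpow_smul
    (G := fun s x ↦ (G s x : ℂ)) hψ hψ2 hψ0 (by positivity) hγ (fun s hs ↦ funext fun w ↦ by
      rw [fourier_eq_integral_exp_I_mul, hF s hs,
        mul_norm_smul_rpow_mul_rpow hν.le hα.ne' (le_of_lt hs)]) ht
  refine ⟨c, hc, δ, hδ, fun x x' hx ↦ ?_⟩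
  rw [setIntegral_Ioc_comp_sub_left (fun s ↦ ∫ y, (G s (x - y) - G s (x' - y)) ^ 2) ht.le,
    norm_sub_rev x' x]
  simp only [integral_sub_left_sub_sub_left_sq]
  exact hle (x - x') (by rwa [norm_sub_rev])

theorem spatial_increment_lower_estimate (d : ℕ) (hd : 1 ≤ d) (ν β α : ℝ)
    (hν : 0 < ν) (hβ0 : 0 < β) (hβ1 : β < 1) (hα0 : 0 < α) (hα2 : α ≤ 2)
    (hdα : (d : ℝ) < min 2 β⁻¹ * α)
    (G : ℝ → EuclideanSpace ℝ (Fin d) → ℝ)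
    (hF : ∀ s > (0 : ℝ), ∀ ξ : EuclideanSpace ℝ (Fin d),
      (∫ x, Complex.exp (Complex.I * (⟪ξ, x⟫ : ℝ)) * (G s x : ℂ))
        = (mittagLeffler β (-(ν * ‖ξ‖ ^ α * s ^ β)) : ℂ))
    (t : ℝ) (ht : 0 < t) :
    ∃ c > (0 : ℝ), ∃ δ > (0 : ℝ), ∀ x x' : EuclideanSpace ℝ (Fin d),
      x ≠ x' → ‖x' - x‖ < δ →
      ∫ r in Ioc (0 : ℝ) t, ∫ y, (G (t - r) (x - y) - G (t - r) (x' - y)) ^ 2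
        ≥ c * ‖x' - x‖ ^ 2 := by
  obtain ⟨c, hc, δ, hδ, hle⟩ :=
    spatial_increment_lower_estimate_general hν hβ0 hβ1.le hα0 (by simpa using hdα) G hF ht
  exact ⟨c, hc, δ, hδ, fun x x' _ hx ↦ hle x x' hx⟩
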